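/- arXiv:1604.00888 — 2 statements merged into one kernel-verified Lean document; each statement's English description precedes it below -/
import Mathlib

section
/- Let G be a finite simple graph with δ(G) ≥ 2·α̃(G) − 2. Then for every set S of vertices with |S| < α(G) and every two distinct vertices u, v ∉ S, there is a path in G from u to v avoiding all vertices of S. (Equivalently, κ(G) ≥ α(G), so the hypothesis of the Chvátal–Erdős theorem is satisfied.) -/
def SimpleGraph.HasBipartiteHole {V : Type*} (G : SimpleGraph V) (s t : ℕ) : Prop :=
  ∃ S T : Finset V, Disjoint S T ∧ S.card = s ∧ T.card = t ∧
    ∀ a ∈ S, ∀ b ∈ T, ¬ G.Adj a b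

noncomputable def SimpleGraph.biHoleNumber {V : Type*} (G : SimpleGraph V) : ℕ :=
  sInf {r : ℕ | ∃ s t : ℕ, 0 < s ∧ 0 < t ∧ r = s + t - 1 ∧ ¬ G.HasBipartiteHole s t}

/-- The independence number `α(G)`: the largest size of a set of pairwise non-adjacent
vertices. -/
noncomputable def SimpleGraph.indepNumber {V : Type*} (G : SimpleGraph V) : ℕ :=
  sSup {n : ℕ | ∃ s : Finset V, s.card = n ∧ ∀ a ∈ s, ∀ b ∈ s, a ≠ b → ¬ G.Adj a b}

namespace SimpleGraph

variable {V : Type*} {G : SimpleGraph V}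

theorem HasBipartiteHole.of_le_card {s t : ℕ} {A B : Finset V} (hAB : Disjoint A B)
    (hs : s ≤ A.card) (ht : t ≤ B.card) (hadj : ∀ a ∈ A, ∀ b ∈ B, ¬ G.Adj a b) :
    G.HasBipartiteHole s t := by
  obtain ⟨A', hA', rfl⟩ := Finset.exists_subset_card_eq hs
  obtain ⟨B', hB', rfl⟩ := Finset.exists_subset_card_eq ht
  exact ⟨A', B', Finset.disjoint_of_subset_left hA' (Finset.disjoint_of_subset_right hB' hAB),
    rfl, rfl, fun a ha b hb => hadj a (hA' ha) b (hB' hb)⟩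

/-- On finitely many vertices the infimum defining the bipartite-hole-number is attained. -/
theorem exists_biHoleNumber_eq [Fintype V] (G : SimpleGraph V) :
    ∃ s t : ℕ, 0 < s ∧ 0 < t ∧ G.biHoleNumber = s + t - 1 ∧ ¬ G.HasBipartiteHole s t := by
  refine Nat.sInf_mem (s := {r : ℕ | ∃ s t : ℕ, 0 < s ∧ 0 < t ∧ r = s + t - 1 ∧
    ¬ G.HasBipartiteHole s t}) ⟨_, Fintype.card V + 1, 1, by omega, by omega, rfl, ?_⟩
  rintro ⟨A, -, -, hA, -⟩
  have := A.card_le_univ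
  omega

/-- An independent set of size `s + t` splits into an `(s, t)`-bipartite-hole. -/
theorem indepNumber_lt_of_not_hasBipartiteHole {s t : ℕ} (hs : 0 < s)
    (hole : ¬ G.HasBipartiteHole s t) : G.indepNumber < s + t := by
  classical
  have key : G.indepNumber ≤ s + t - 1 := by
    refine csSup_le' ?_
    rintro _ ⟨I, rfl, hI⟩
    by_contra! hlt
    obtain ⟨A, hA, hAs⟩ := Finset.exists_subset_card_eq (show s ≤ I.card by omega)
    have hcard := Finset.card_sdiff_add_card_eq_card hA
    refine hole (.of_le_card (A := A) (B := I \ A) Finset.disjoint_sdiff hAs.ge (by omega) ?_)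
    intro a ha b hb
    rw [Finset.mem_sdiff] at hb
    exact hI a (hA ha) b hb.1 fun hab => hb.2 (hab ▸ ha)
  omega

theorem minDegree_lt_card_insert_neighborFinset_sdiff [Fintype V] [DecidableEq V]
    [DecidableRel G.Adj] (S : Finset V) (x : V) :
    G.minDegree < (insert x (G.neighborFinset x \ S)).card + S.card := by
  rw [Finset.card_insert_of_notMem (by simp)]
  have h₁ := Finset.le_card_sdiff S (G.neighborFinset x)
  have h₂ := G.minDegree_le_degree x
  rw [G.card_neighborFinset_eq_degree] at h₁
  omega

theorem exists_walk_of_mem_insert_neighborFinset_sdiff [Fintype V] [DecidableEq V]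
    [DecidableRel G.Adj] {S : Finset V} {x a : V} (hx : x ∉ S)
    (ha : a ∈ insert x (G.neighborFinset x \ S)) :
    ∃ p : G.Walk x a, ∀ w ∈ p.support, w ∉ S := by
  rw [Finset.mem_insert, Finset.mem_sdiff, mem_neighborFinset] at ha
  rcases ha with rfl | ⟨hadj, haS⟩
  · exact ⟨.nil, by simpa using hx⟩
  · exact ⟨hadj.toWalk, by simp [hx, haS]⟩

end SimpleGraph

open SimpleGraph in
theorem connectivity_ge_indepNumber_of_minDegree_ge
    {V : Type*} [Fintype V] [DecidableEq V] (G : SimpleGraph V) [DecidableRel G.Adj]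
    (h : 2 * G.biHoleNumber ≤ G.minDegree + 2)
    (S : Finset V) (hS : S.card < G.indepNumber)
    (u v : V) (huv : u ≠ v) (hu : u ∉ S) (hv : v ∉ S) :
    ∃ p : G.Walk u v, p.IsPath ∧ ∀ w ∈ p.support, w ∉ S := by
  suffices hwalk : ∃ p : G.Walk u v, ∀ w ∈ p.support, w ∉ S by
    obtain ⟨p, hp⟩ := hwalk
    exact ⟨p.bypass, p.bypass_isPath, fun w hw => hp w (p.support_bypass_subset_support hw)⟩
  by_contra hno
  obtain ⟨s, t, hs, ht, hr, hole⟩ := G.exists_biHoleNumber_eq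
  have hα := indepNumber_lt_of_not_hasBipartiteHole hs hole
  have hcu := G.minDegree_lt_card_insert_neighborFinset_sdiff S u
  have hcv := G.minDegree_lt_card_insert_neighborFinset_sdiff S v
  refine hole (.of_le_card (A := insert u (G.neighborFinset u \ S))
    (B := insert v (G.neighborFinset v \ S)) ?_ (by omega) (by omega) ?_)
  · rw [Finset.disjoint_left]
    intro a ha hb
    obtain ⟨p, hp⟩ := exists_walk_of_mem_insert_neighborFinset_sdiff hu ha
    obtain ⟨q, hq⟩ := exists_walk_of_mem_insert_neighborFinset_sdiff hv hb
    refine hno ⟨p.append q.reverse, fun w hw => ?_⟩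
    rw [Walk.mem_support_append_iff, Walk.support_reverse, List.mem_reverse] at hw
    exact hw.elim (hp w) (hq w)
  · intro a ha b hb hab
    obtain ⟨p, hp⟩ := exists_walk_of_mem_insert_neighborFinset_sdiff hu ha
    obtain ⟨q, hq⟩ := exists_walk_of_mem_insert_neighborFinset_sdiff hv hb
    refine hno ⟨p.append (.cons hab q.reverse), fun w hw => ?_⟩
    rw [Walk.mem_support_append_iff, Walk.support_cons, List.mem_cons, Walk.support_reverse,
      List.mem_reverse] at hw
    rcases hw with hw | rfl | hw
    exacts [hp w hw, hp w p.end_mem_support, hq w hw]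
end

section
/- Let r ≥ 1 and let H₁, …, H_r be Hamilton cycles of a finite simple graph G (each H_i is a spanning cycle of G, viewed as a set of edges of G). Let H = H₁ ∪ … ∪ H_r and let G − H denote the graph on the same vertex set whose edge set is E(G) with all edges of H removed. Then α̃(G − H) + 1 ≤ (r + 1)(α̃(G) + 1). -/
namespace SimpleGraph

variable {V : Type*} {G : SimpleGraph V}

theorem HasBipartiteHole.symm {s t : ℕ} (h : G.HasBipartiteHole s t) :
    G.HasBipartiteHole t s := by
  obtain ⟨S, T, hd, hS, hT, h⟩ := h
  exact ⟨T, S, hd.symm, hT, hS, fun a ha b hb hab => h b hb a ha hab.symm⟩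

theorem biHoleNumber_add_one_le {s t : ℕ} (hs : 0 < s) (ht : 0 < t)
    (h : ¬ G.HasBipartiteHole s t) : G.biHoleNumber + 1 ≤ s + t := by
  have : G.biHoleNumber ≤ s + t - 1 := Nat.sInf_le ⟨s, t, hs, ht, rfl, h⟩
  omega

theorem exists_not_hasBipartiteHole [Fintype V] (G : SimpleGraph V) :
    ∃ s t : ℕ, 0 < s ∧ s ≤ t ∧ G.biHoleNumber + 1 = s + t ∧ ¬ G.HasBipartiteHole s t := by
  have hne : {r : ℕ | ∃ s t : ℕ, 0 < s ∧ 0 < t ∧ r = s + t - 1 ∧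
      ¬ G.HasBipartiteHole s t}.Nonempty := by
    refine ⟨_, Fintype.card V + 1, 1, by omega, by omega, rfl, ?_⟩
    rintro ⟨S, -, -, hS, -⟩
    have := S.card_le_univ
    omega
  obtain ⟨s, t, hs, ht, hst, h⟩ := Nat.sInf_mem hne
  change G.biHoleNumber = _ at hst
  rcases le_total s t with hle | hle
  · exact ⟨s, t, hs, hle, by omega, h⟩
  · exact ⟨t, s, ht, hle, by omega, fun hole => h hole.symm⟩

/-- If the deleted edges at each vertex go to at most `d` vertices, then a hole whose second side is
larger by `d * s` after the deletion contains a hole of the original graph. -/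
theorem HasBipartiteHole.of_deleteEdges [DecidableEq V] {E : Set (Sym2 V)} {d s t : ℕ}
    (N : V → Finset V) (hN : ∀ a b, s(a, b) ∈ E → b ∈ N a) (hd : ∀ a, (N a).card ≤ d)
    (h : (G.deleteEdges E).HasBipartiteHole s (t + d * s)) : G.HasBipartiteHole s t := by
  obtain ⟨S, T, hdisj, hS, hT, h⟩ := h
  have hcard : (S.biUnion N).card ≤ d * s := by
    rw [← hS, mul_comm]
    exact Finset.card_biUnion_le_card_mul _ _ _ fun a _ => hd a
  have hle : t ≤ (T \ S.biUnion N).card := by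
    have := Finset.le_card_sdiff (S.biUnion N) T
    omega
  obtain ⟨T', hT', hcard'⟩ := Finset.exists_subset_card_eq hle
  refine ⟨S, T', hdisj.mono_right (hT'.trans Finset.sdiff_subset), hS, hcard', ?_⟩
  intro a ha b hb hab
  obtain ⟨hbT, hbN⟩ := Finset.mem_sdiff.1 (hT' hb)
  refine h a ha b hbT (deleteEdges_adj.2 ⟨hab, fun he => hbN ?_⟩)
  exact Finset.mem_biUnion.2 ⟨a, ha, hN a b he⟩

end SimpleGraph

theorem biHoleNumber_deleteEdges_le
    {V : Type*} [Fintype V] [DecidableEq V] (G : SimpleGraph V)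
    (r : ℕ) (hr : 1 ≤ r) (c : Fin r → Σ a : V, G.Walk a a)
    (hham : ∀ i, (c i).2.IsHamiltonianCycle) :
    (G.deleteEdges (⋃ i, {e | e ∈ (c i).2.edges})).biHoleNumber + 1 ≤
      (r + 1) * (G.biHoleNumber + 1) := by
  classical
  obtain ⟨s, t, hs, hst, heq, h⟩ := G.exists_not_hasBipartiteHole
  let N : V → Finset V := fun a =>
    Finset.univ.biUnion fun i => ((c i).2.toSubgraph.neighborSet a).toFinset
  have hN : ∀ a b, s(a, b) ∈ (⋃ i, {e | e ∈ (c i).2.edges}) → b ∈ N a := by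
    intro a b hab
    obtain ⟨i, hi⟩ := Set.mem_iUnion.1 hab
    refine Finset.mem_biUnion.2 ⟨i, Finset.mem_univ i, ?_⟩
    rw [Set.mem_toFinset, SimpleGraph.Subgraph.mem_neighborSet]
    exact SimpleGraph.Walk.adj_toSubgraph_iff_mem_edges.2 hi
  have hd : ∀ a, (N a).card ≤ r * 2 := by
    intro a
    refine (Finset.card_biUnion_le_card_mul _ _ 2 fun i _ => ?_).trans_eq (by simp)
    rw [← Set.ncard_eq_toFinset_card']
    exact ((hham i).isCycle.ncard_neighborSet_toSubgraph_eq_two ((hham i).mem_support a)).le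
  have hle := SimpleGraph.biHoleNumber_add_one_le hs (t := t + r * 2 * s) (by omega)
    fun h' => h (h'.of_deleteEdges N hN hd)
  rw [heq]
  nlinarith [Nat.mul_le_mul_left r hst]
end
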